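/- arXiv:1907.05658 — 2 statements merged into one kernel-verified Lean document; each statement's English description precedes it below -/
import Mathlib

section
/- Let φ : ℝ → ℂ be continuous, integrable and compactly supported, let λ ∈ ℂ and k ∈ ℕ₀, and suppose the sequence ℓ ↦ φ̂^{(k)}(−iλ/(2π) + ℓ) is absolutely summable over ℤ. Then for every t ∈ ℝ (Poisson summation applied to x ↦ x^k·e^{−λx}·φ(x)): Σ_{ℓ∈ℤ} (t−ℓ)^k · e^{−λ(t−ℓ)} · φ(t−ℓ) = (−1/(2πi))^k · Σ_{ℓ∈ℤ} φ̂^{(k)}(−iλ/(2π) + ℓ) · e^{2πi ℓ t}. -/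
open MeasureTheory

/-- The Fourier transform of `φ`, analytically extended to `ℂ`:
`φ̂(z) = ∫_ℝ φ(x)·e^{−2πi x z} dx`. -/
noncomputable def fourierExt (φ : ℝ → ℂ) (z : ℂ) : ℂ :=
  ∫ x : ℝ, φ x * Complex.exp (-(2 * (Real.pi : ℂ) * Complex.I * (x : ℂ) * z))

/-!
If `φ` decays like `e^{-a|x|}`, then `φ̂` is holomorphic on the strip `2π|Im z| < a`, where it may
be differentiated under the integral sign. Each derivative brings down a factor `-2πix`, and the
imaginary shift `-iλ/(2π)` of the argument turns into the factor `e^{-λx}`, so that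
`φ̂^{(k)}(-iλ/(2π) + ξ) = (-2πi)^k · 𝓕(x^k e^{-λx} φ)(ξ)` for real `ξ`. When `|Re λ| < a`, the
function `x^k e^{-λx} φ` still decays exponentially, and Poisson summation applies to it.
-/

section

open Filter Asymptotics
open Complex (I)
open scoped Real Topology FourierTransform

theorem integrable_mul_of_norm_le_mul_norm {α 𝕜 : Type*} [MeasurableSpace α] [RCLike 𝕜]
    {μ : Measure α} {f g w : α → 𝕜} {C : ℝ} (hwf : Integrable (fun x ↦ w x * f x) μ)
    (hw : AEStronglyMeasurable w μ) (hg : AEStronglyMeasurable g μ)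
    (hgw : ∀ x, ‖g x‖ ≤ C * ‖w x‖) : Integrable (fun x ↦ g x * f x) μ := by
  have hdiv_le (x : α) : ‖g x / w x‖ ≤ |C| := by
    rw [norm_div]
    refine div_le_of_le_mul₀ (norm_nonneg _) (abs_nonneg C) ((hgw x).trans ?_)
    gcongr
    exact le_abs_self C
  have hcancel (x : α) : g x / w x * (w x * f x) = g x * f x := by
    rcases eq_or_ne (w x) 0 with hwx | hwx
    · have hgx : g x = 0 := by simpa [hwx] using hgw x
      simp [hgx]
    · rw [← mul_assoc, div_mul_cancel₀ _ hwx]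
  simpa only [Pi.div_apply, hcancel] using hwf.bdd_mul (hg.div₀ hw) (ae_of_all μ hdiv_le)

variable {φ : ℝ → ℂ} {a b : ℝ} {z lam : ℂ}

theorem abs_mul_exp_mul_abs_le (hab : b < a) (x : ℝ) :
    |x| * Real.exp (b * |x|) ≤ (a - b)⁻¹ * Real.exp (a * |x|) := by
  have hpos : 0 < a - b := sub_pos.mpr hab
  have hle : (a - b) * |x| ≤ Real.exp ((a - b) * |x|) := by
    linarith [Real.add_one_le_exp ((a - b) * |x|)]
  calc |x| * Real.exp (b * |x|)
      = (a - b)⁻¹ * ((a - b) * |x| * Real.exp (b * |x|)) := by field_simp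
    _ ≤ (a - b)⁻¹ * (Real.exp ((a - b) * |x|) * Real.exp (b * |x|)) := by gcongr
    _ = (a - b)⁻¹ * Real.exp (a * |x|) := by rw [← Real.exp_add]; ring_nf

theorem norm_two_pi_I_mul (x : ℝ) : ‖2 * (π : ℂ) * I * (x : ℂ)‖ = 2 * π * |x| := by
  simp [abs_of_pos Real.pi_pos]

theorem norm_cexp_neg_two_pi_I_mul_le (hz : 2 * π * |z.im| ≤ b) (x : ℝ) :
    ‖Complex.exp (-(2 * (π : ℂ) * I * (x : ℂ) * z))‖ ≤ Real.exp (b * |x|) := by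
  have hre : (-(2 * (π : ℂ) * I * (x : ℂ) * z)).re = 2 * π * (z.im * x) := by
    simp only [Complex.neg_re, Complex.mul_re, Complex.mul_im, Complex.re_ofNat, Complex.im_ofNat,
      Complex.ofReal_re, Complex.ofReal_im, Complex.I_re, Complex.I_im]
    ring
  rw [Complex.norm_exp, hre, Real.exp_le_exp]
  calc 2 * π * (z.im * x)
      ≤ 2 * π * (|z.im| * |x|) := by
        rw [← abs_mul]
        gcongr
        exact le_abs_self _
    _ = 2 * π * |z.im| * |x| := by ring
    _ ≤ b * |x| := by gcongr

theorem norm_two_pi_I_mul_cexp_le (hab : b < a) (hz : 2 * π * |z.im| ≤ b) (x : ℝ) :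
    ‖-(2 * (π : ℂ) * I * (x : ℂ)) * Complex.exp (-(2 * (π : ℂ) * I * (x : ℂ) * z))‖ ≤
      2 * π * (a - b)⁻¹ * Real.exp (a * |x|) := by
  rw [norm_mul, norm_neg, norm_two_pi_I_mul]
  calc 2 * π * |x| * ‖Complex.exp (-(2 * (π : ℂ) * I * (x : ℂ) * z))‖
      ≤ 2 * π * |x| * Real.exp (b * |x|) := by
        gcongr
        exact norm_cexp_neg_two_pi_I_mul_le hz x
    _ = 2 * π * (|x| * Real.exp (b * |x|)) := mul_assoc _ _ _
    _ ≤ 2 * π * ((a - b)⁻¹ * Real.exp (a * |x|)) := by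
        gcongr 2 * π * ?_
        exact abs_mul_exp_mul_abs_le hab x
    _ = 2 * π * (a - b)⁻¹ * Real.exp (a * |x|) := (mul_assoc _ _ _).symm

theorem integrable_exp_mul_abs_mul_two_pi_I_mul (hab : b < a)
    (hφ : Integrable fun x : ℝ ↦ (Real.exp (a * |x|) : ℂ) * φ x) :
    Integrable fun x : ℝ ↦ (Real.exp (b * |x|) : ℂ) * (-(2 * (π : ℂ) * I * (x : ℂ)) * φ x) := by
  simp_rw [← mul_assoc]
  refine integrable_mul_of_norm_le_mul_norm (C := 2 * π * (a - b)⁻¹) hφ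
    (by fun_prop) (by fun_prop) fun x ↦ ?_
  rw [norm_mul, norm_neg, norm_two_pi_I_mul, Complex.norm_real, Complex.norm_real,
    Real.norm_eq_abs, Real.norm_eq_abs, Real.abs_exp, Real.abs_exp]
  linarith [mul_le_mul_of_nonneg_left (abs_mul_exp_mul_abs_le hab x) Real.two_pi_pos.le]

theorem hasDerivAt_cexp_neg_two_pi_I_mul (x : ℝ) (z : ℂ) :
    HasDerivAt (fun w : ℂ ↦ Complex.exp (-(2 * (π : ℂ) * I * (x : ℂ) * w)))
      (-(2 * (π : ℂ) * I * (x : ℂ)) * Complex.exp (-(2 * (π : ℂ) * I * (x : ℂ) * z))) z := by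
  simpa [mul_comm] using (hasDerivAt_mul_const (-(2 * (π : ℂ) * I * (x : ℂ)))).cexp

theorem integrable_mul_cexp_neg_two_pi_I_mul
    (hφ : Integrable fun x : ℝ ↦ (Real.exp (a * |x|) : ℂ) * φ x)
    (hz : 2 * π * |z.im| ≤ a) :
    Integrable fun x : ℝ ↦ φ x * Complex.exp (-(2 * (π : ℂ) * I * (x : ℂ) * z)) := by
  simp_rw [mul_comm (φ _)]
  refine integrable_mul_of_norm_le_mul_norm (C := 1) hφ (by fun_prop) (by fun_prop) fun x ↦ ?_
  rw [one_mul, Complex.norm_real, Real.norm_eq_abs, Real.abs_exp]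
  exact norm_cexp_neg_two_pi_I_mul_le hz x

theorem hasDerivAt_fourierExt
    (hφ : Integrable fun x : ℝ ↦ (Real.exp (a * |x|) : ℂ) * φ x)
    (hz : 2 * π * |z.im| < a) :
    HasDerivAt (fourierExt φ)
      (fourierExt (fun x : ℝ ↦ -(2 * (π : ℂ) * I * (x : ℂ)) * φ x) z) z := by
  -- The gap between `b` and `a` absorbs the factor `x` produced by the derivative.
  obtain ⟨b, hzb, hba⟩ := exists_between hz
  have hstrip : {w : ℂ | 2 * π * |w.im| < b} ∈ 𝓝 z :=
    ContinuousAt.eventually_lt (by fun_prop) continuousAt_const hzb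
  refine (hasDerivAt_integral_of_dominated_loc_of_deriv_le
    (F := fun w x ↦ φ x * Complex.exp (-(2 * (π : ℂ) * I * (x : ℂ) * w)))
    (F' := fun w x ↦ -(2 * (π : ℂ) * I * (x : ℂ)) * φ x *
      Complex.exp (-(2 * (π : ℂ) * I * (x : ℂ) * w)))
    (bound := fun x ↦ 2 * π * (a - b)⁻¹ * ‖(Real.exp (a * |x|) : ℂ) * φ x‖) hstrip
    ?meas (integrable_mul_cexp_neg_two_pi_I_mul hφ hz.le) ?deriv_meas ?deriv_bound
    (hφ.norm.const_mul _) ?hasDeriv).2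
  case meas =>
    filter_upwards [hstrip] with w hw
    exact (integrable_mul_cexp_neg_two_pi_I_mul hφ (hw.trans hba).le).aestronglyMeasurable
  case deriv_meas =>
    exact (integrable_mul_cexp_neg_two_pi_I_mul
      (integrable_exp_mul_abs_mul_two_pi_I_mul hba hφ) hzb.le).aestronglyMeasurable
  case deriv_bound =>
    refine ae_of_all _ fun x w hw ↦ ?_
    rw [mul_right_comm, norm_mul, norm_mul (Complex.ofReal _), Complex.norm_real, Real.norm_eq_abs,
      Real.abs_exp, ← mul_assoc]
    gcongr
    exact norm_two_pi_I_mul_cexp_le hba hw.le x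
  case hasDeriv =>
    refine ae_of_all _ fun x w _ ↦ ?_
    refine ((hasDerivAt_cexp_neg_two_pi_I_mul x w).const_mul (φ x)).congr_deriv ?_
    ring

theorem iteratedDeriv_fourierExt (k : ℕ)
    (hφ : Integrable fun x : ℝ ↦ (Real.exp (a * |x|) : ℂ) * φ x)
    (hz : 2 * π * |z.im| < a) :
    iteratedDeriv k (fourierExt φ) z =
      fourierExt (fun x : ℝ ↦ (-(2 * (π : ℂ) * I * (x : ℂ))) ^ k * φ x) z := by
  induction k generalizing φ a with
  | zero => simp
  | succ k ih =>
    obtain ⟨b, hzb, hba⟩ := exists_between hz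
    have hstrip : ∀ᶠ w in 𝓝 z, 2 * π * |w.im| < a :=
      ContinuousAt.eventually_lt (by fun_prop) continuousAt_const hz
    have hderiv : deriv (fourierExt φ) =ᶠ[𝓝 z]
        fourierExt (fun x : ℝ ↦ -(2 * (π : ℂ) * I * (x : ℂ)) * φ x) :=
      hstrip.mono fun w hw ↦ (hasDerivAt_fourierExt hφ hw).deriv
    rw [iteratedDeriv_succ', hderiv.iteratedDeriv_eq k,
      ih (integrable_exp_mul_abs_mul_two_pi_I_mul hba hφ) hzb]
    simp only [pow_succ, mul_assoc]

theorem fourierExt_const_mul (c : ℂ) (φ : ℝ → ℂ) (z : ℂ) :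
    fourierExt (fun x ↦ c * φ x) z = c * fourierExt φ z := by
  simp only [fourierExt, mul_assoc, integral_const_mul]

theorem fourierExt_shift_eq_fourier (φ : ℝ → ℂ) (lam : ℂ) (ξ : ℝ) :
    fourierExt φ (-(I * lam) / (2 * (π : ℂ)) + (ξ : ℂ)) =
      𝓕 (fun x : ℝ ↦ Complex.exp (-lam * (x : ℂ)) * φ x) ξ := by
  rw [Real.fourier_real_eq_integral_exp_smul, fourierExt]
  refine integral_congr_ae (ae_of_all _ fun x ↦ ?_)
  have hpi : (π : ℂ) ≠ 0 := Complex.ofReal_ne_zero.mpr Real.pi_ne_zero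
  have hexp : -(2 * (π : ℂ) * I * (x : ℂ) * (-(I * lam) / (2 * (π : ℂ)) + (ξ : ℂ))) =
      -lam * x + ↑(-2 * π * x * ξ) * I := by
    push_cast
    field_simp
    linear_combination lam * x * Complex.I_sq
  simp only [hexp, Complex.exp_add, smul_eq_mul]
  ring

theorem iteratedDeriv_fourierExt_shift_eq_fourier (k : ℕ)
    (hφ : Integrable fun x : ℝ ↦ (Real.exp (a * |x|) : ℂ) * φ x) (hlam : |lam.re| < a) (ξ : ℝ) :
    iteratedDeriv k (fourierExt φ) (-(I * lam) / (2 * (π : ℂ)) + (ξ : ℂ)) =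
      (-(2 * (π : ℂ) * I)) ^ k *
        𝓕 (fun x : ℝ ↦ (x : ℂ) ^ k * Complex.exp (-lam * (x : ℂ)) * φ x) ξ := by
  have him : (-(I * lam) / (2 * (π : ℂ)) + (ξ : ℂ)).im = -lam.re / (2 * π) := by
    have hcast : (2 * (π : ℂ)) = ((2 * π : ℝ) : ℂ) := by push_cast; rfl
    rw [hcast, Complex.add_im, Complex.div_ofReal_im]
    simp
  have hstrip : 2 * π * |(-(I * lam) / (2 * (π : ℂ)) + (ξ : ℂ)).im| < a := by
    rwa [him, abs_div, abs_neg, abs_of_pos Real.two_pi_pos, mul_div_cancel₀ _ Real.two_pi_pos.ne']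
  have hpow (x : ℝ) : (-(2 * (π : ℂ) * I * (x : ℂ))) ^ k * φ x =
      (-(2 * (π : ℂ) * I)) ^ k * ((x : ℂ) ^ k * φ x) := by
    rw [← neg_mul, mul_pow, mul_assoc]
  rw [iteratedDeriv_fourierExt k hφ hstrip, funext hpow, fourierExt_const_mul,
    fourierExt_shift_eq_fourier]
  simp only [mul_left_comm, mul_assoc]

theorem isBigO_pow_mul_cexp_mul (k : ℕ)
    (hφ : φ =O[cocompact ℝ] fun x ↦ Real.exp (-a * |x|)) (hb : b < a - |lam.re|) :
    (fun x : ℝ ↦ (x : ℂ) ^ k * Complex.exp (-lam * (x : ℂ)) * φ x) =O[cocompact ℝ]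
      fun x ↦ Real.exp (-b * |x|) := by
  have hpow : (fun x : ℝ ↦ (x : ℂ) ^ k) =O[cocompact ℝ]
      fun x ↦ Real.exp ((a - |lam.re| - b) * |x|) := by
    have hatTop := (isLittleO_pow_exp_pos_mul_atTop k (sub_pos.mpr hb)).isBigO
    refine IsBigO.of_norm_left ?_
    simpa [Function.comp_def] using hatTop.comp_tendsto (tendsto_norm_cocompact_atTop (E := ℝ))
  have hexp : (fun x : ℝ ↦ Complex.exp (-lam * (x : ℂ))) =O[cocompact ℝ]
      fun x ↦ Real.exp (|lam.re| * |x|) := by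
    refine isBigO_of_le _ fun x ↦ ?_
    rw [Complex.norm_exp, Real.norm_eq_abs, Real.abs_exp, Real.exp_le_exp, ← abs_mul]
    simpa using neg_le_abs (lam.re * x)
  refine ((hpow.mul hexp).mul hφ).congr_right fun x ↦ ?_
  rw [← Real.exp_add, ← Real.exp_add]
  ring_nf

theorem integrable_exp_neg_mul_abs {c : ℝ} (hc : 0 < c) :
    Integrable fun x : ℝ ↦ Real.exp (-c * |x|) := by
  have hcont : Continuous fun x : ℝ ↦ Real.exp (-c * |x|) := by fun_prop
  have hIoi : IntegrableOn (fun x ↦ Real.exp (-c * |x|)) (Set.Ioi 0) :=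
    (exp_neg_integrableOn_Ioi 0 hc).congr_fun (fun x hx ↦ by rw [abs_of_pos hx]) measurableSet_Ioi
  exact hcont.locallyIntegrable.integrable_of_isBigO_atTop_of_norm_isNegInvariant
    (ae_of_all _ fun x ↦ by simp) (isBigO_refl _ _) ⟨Set.Ioi 0, Ioi_mem_atTop 0, hIoi⟩

theorem integrable_exp_mul_abs_mul_of_isBigO (hcont : Continuous φ)
    (hφ : φ =O[cocompact ℝ] fun x ↦ Real.exp (-a * |x|)) (hba : b < a) :
    Integrable fun x : ℝ ↦ (Real.exp (b * |x|) : ℂ) * φ x := by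
  have hweight : (fun x : ℝ ↦ (Real.exp (b * |x|) : ℂ)) =O[cocompact ℝ]
      fun x ↦ Real.exp (b * |x|) := isBigO_of_le _ fun x ↦ (Complex.norm_real _).le
  refine (Continuous.locallyIntegrable (by fun_prop)).integrable_of_isBigO_cocompact
    (hweight.mul hφ) ?_
  have hdecay := integrable_exp_neg_mul_abs (sub_pos.mpr hba)
  refine (hdecay.congr (ae_of_all _ fun x ↦ ?_)).integrableAtFilter _
  simp only [← Real.exp_add]
  ring_nf

theorem tsum_sub_eq_tsum_fourier_of_isBigO_exp_neg {g : ℝ → ℂ} {c : ℝ} (hc : 0 < c)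
    (hcont : Continuous g) (hg : g =O[cocompact ℝ] fun x ↦ Real.exp (-c * |x|))
    (hsum : Summable fun ℓ : ℤ ↦ 𝓕 g (ℓ : ℝ)) (t : ℝ) :
    ∑' ℓ : ℤ, g (t - ℓ) =
      ∑' ℓ : ℤ, 𝓕 g (ℓ : ℝ) * Complex.exp (2 * (π : ℂ) * I * (ℓ : ℂ) * (t : ℂ)) := by
  have hdecay : g =O[cocompact ℝ] fun x ↦ |x| ^ (-(2 : ℝ)) :=
    hg.trans ((isLittleO_exp_neg_mul_rpow_atTop hc _).isBigO.comp_tendsto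
      (tendsto_norm_cocompact_atTop (E := ℝ)))
  calc ∑' ℓ : ℤ, g (t - ℓ)
      = ∑' ℓ : ℤ, g (t + ℓ) := by
        simpa [sub_eq_add_neg] using (Equiv.neg ℤ).tsum_eq fun ℓ : ℤ ↦ g (t + ℓ)
    _ = ∑' ℓ : ℤ, 𝓕 g (ℓ : ℝ) * fourier ℓ (t : UnitAddCircle) :=
        Real.tsum_eq_tsum_fourier_of_rpow_decay_of_summable hcont one_lt_two hdecay hsum t
    _ = _ := by simp only [fourier_coe_apply, Complex.ofReal_one, div_one]

theorem isBigO_cocompact_of_hasCompactSupport {X E F : Type*} [TopologicalSpace X] [R1Space X]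
    [NormedAddCommGroup E] [Norm F] {f : X → E} (hf : HasCompactSupport f) (g : X → F) :
    f =O[cocompact X] g := by
  rw [hasCompactSupport_iff_eventuallyEq, coclosedCompact_eq_cocompact] at hf
  exact hf.trans_isBigO (isBigO_zero _ _)

theorem stmt_12_general (φ : ℝ → ℂ) (hcont : Continuous φ) (a : ℝ)
    (hdecay : φ =O[cocompact ℝ] fun x ↦ Real.exp (-a * |x|)) (lam : ℂ) (hlam : |lam.re| < a)
    (k : ℕ)
    (hsum : Summable (fun ℓ : ℤ =>
      ‖iteratedDeriv k (fourierExt φ) (-(I * lam) / (2 * (π : ℂ)) + (ℓ : ℂ))‖))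
    (t : ℝ) :
    ∑' ℓ : ℤ, ((t : ℂ) - (ℓ : ℂ)) ^ k * Complex.exp (-lam * ((t : ℂ) - (ℓ : ℂ))) *
        φ (t - (ℓ : ℝ))
      = (-1 / (2 * (π : ℂ) * I)) ^ k *
        ∑' ℓ : ℤ, iteratedDeriv k (fourierExt φ)
            (-(I * lam) / (2 * (π : ℂ)) + (ℓ : ℂ)) *
          Complex.exp (2 * (π : ℂ) * I * (ℓ : ℂ) * (t : ℂ)) := by
  set g : ℝ → ℂ := fun x ↦ (x : ℂ) ^ k * Complex.exp (-lam * (x : ℂ)) * φ x with hg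
  obtain ⟨b, hlb, hba⟩ := exists_between hlam
  have hcoeff (ℓ : ℤ) : (-1 / (2 * (π : ℂ) * I)) ^ k *
      iteratedDeriv k (fourierExt φ) (-(I * lam) / (2 * (π : ℂ)) + (ℓ : ℂ)) = 𝓕 g (ℓ : ℝ) := by
    have hderiv := iteratedDeriv_fourierExt_shift_eq_fourier k
      (integrable_exp_mul_abs_mul_of_isBigO hcont hdecay hba) hlb ℓ
    rw [Complex.ofReal_intCast] at hderiv
    rw [hderiv, ← mul_assoc, ← mul_pow, neg_div, neg_mul_neg,
      one_div_mul_cancel Complex.two_pi_I_ne_zero, one_pow, one_mul]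
  have hsum_fourier : Summable fun ℓ : ℤ ↦ 𝓕 g (ℓ : ℝ) :=
    (hsum.of_norm.mul_left _).congr hcoeff
  obtain ⟨c, hc, hca⟩ := exists_between (sub_pos.mpr hlam)
  have hpoisson := tsum_sub_eq_tsum_fourier_of_isBigO_exp_neg hc (by fun_prop : Continuous g)
    (isBigO_pow_mul_cexp_mul k hdecay hca) hsum_fourier t
  simpa only [hg, ← tsum_mul_left, ← mul_assoc, hcoeff, Complex.ofReal_sub,
    Complex.ofReal_intCast] using hpoisson

end

/-- Poisson summation applied to `x ↦ x^k·e^{−λx}·φ(x)`: if the sequence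
`ℓ ↦ φ̂^{(k)}(−iλ/(2π)+ℓ)` is absolutely summable, then for all `t ∈ ℝ`,
`Σ_ℓ (t−ℓ)^k·e^{−λ(t−ℓ)}·φ(t−ℓ) = (−1/(2πi))^k · Σ_ℓ φ̂^{(k)}(−iλ/(2π)+ℓ)·e^{2πiℓt}`. -/
theorem stmt_12 (φ : ℝ → ℂ) (hcont : Continuous φ) (hint : Integrable φ)
    (hsupp : HasCompactSupport φ) (lam : ℂ) (k : ℕ)
    (hsum : Summable (fun ℓ : ℤ =>
      ‖iteratedDeriv k (fourierExt φ) (-(Complex.I * lam) / (2 * (Real.pi : ℂ)) + (ℓ : ℂ))‖)) :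
    ∀ t : ℝ,
      ∑' ℓ : ℤ, ((t : ℂ) - (ℓ : ℂ)) ^ k * Complex.exp (-lam * ((t : ℂ) - (ℓ : ℂ))) *
          φ (t - (ℓ : ℝ))
        = (-1 / (2 * (Real.pi : ℂ) * Complex.I)) ^ k *
          ∑' ℓ : ℤ, iteratedDeriv k (fourierExt φ)
              (-(Complex.I * lam) / (2 * (Real.pi : ℂ)) + (ℓ : ℂ)) *
            Complex.exp (2 * (Real.pi : ℂ) * Complex.I * (ℓ : ℂ) * (t : ℂ)) := by
  exact stmt_12_general φ hcont (|lam.re| + 1)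
    (isBigO_cocompact_of_hasCompactSupport hsupp _) lam (lt_add_one _) k hsum
end

section
/- Let N ∈ ℕ and C > 0, and for each j ∈ ℕ let a_j(y) = Σ_{m=0}^N a_{j,m}·e^{−2πi m y} be a trigonometric polynomial of degree at most N with a_j(0) = 1 and sup_{y∈ℝ}|a_j(y)| ≤ C. Let φ : ℝ → ℂ be continuous, integrable and compactly supported with φ̂(z) = Π_{j=1}^∞ a_j(2^{−j} z) for all z ∈ ℂ (pointwise limit of partial products). Let α ∈ ℂ and suppose there exist C' > 0 and q ∈ (0,1) such that |φ̂(α + ℓ)| ≤ C'·q^{|ℓ|} for all ℓ ∈ ℤ. Then the set { ℓ ∈ ℤ : φ̂(α + ℓ) ≠ 0 } contains at most N elements. -/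
open MeasureTheory

/-!
Let `F_n` be the `n`-th partial product. Then `F_J` is `2^J`-periodic, and `F_{J+n}` is `F_J` times
an exponential sum with spectrum in `[0, N / 2^J]`. Given `N + 1` integers `ℓ` with `φ̂(α + ℓ) ≠ 0`,
choose `J` such that they are distinct modulo `2^J`; linear algebra then yields nonzero weights `γ`,
supported on their residues, such that the discrete Fourier transform of `k ↦ F_J(α + k) γ(k)`
vanishes at `1, …, N`. By Poisson summation, `∑_ℓ γ(ℓ) F_n(α + ℓ) η̂(ℓ) = 0` for every `n ≥ J` and
every test function `η` supported in `(0, 2^{-J})`; since the partial products grow polynomially,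
uniformly in `n`, also `∑_ℓ γ(ℓ) φ̂(α + ℓ) η̂(ℓ) = 0`. Hence the Fourier series with coefficients
`γ(ℓ) φ̂(α + ℓ)` vanishes on an interval. Exponential decay makes it real analytic, so all its
coefficients are zero, which is a contradiction.
-/

open Complex (exp I)
open Filter Topology
open scoped FourierTransform Real SchwartzMap

section ExpSpan

/-- The complex functions of exponential type whose spectrum is a finite subset of `[0, τ]`:
linear combinations of `z ↦ e^{-2πi t z}` with `0 ≤ t ≤ τ`. -/
noncomputable def expSpan (τ : ℝ) : Submodule ℂ (ℂ → ℂ) :=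
  Submodule.span ℂ
    ((fun (t : ℝ) (z : ℂ) ↦ exp (-(2 * π * I * t * z))) '' Set.Icc 0 τ)

lemma exp_mem_expSpan {t τ : ℝ} (ht : t ∈ Set.Icc 0 τ) :
    (fun z : ℂ ↦ exp (-(2 * π * I * t * z))) ∈ expSpan τ :=
  Submodule.subset_span ⟨t, ht, rfl⟩

lemma expSpan_mono {σ τ : ℝ} (h : σ ≤ τ) : expSpan σ ≤ expSpan τ :=
  Submodule.span_mono (Set.image_mono (Set.Icc_subset_Icc_right h))

lemma one_mem_expSpan {τ : ℝ} (hτ : 0 ≤ τ) : (1 : ℂ → ℂ) ∈ expSpan τ := by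
  convert exp_mem_expSpan (Set.left_mem_Icc.2 hτ) using 2 with z
  simp

lemma mul_mem_expSpan {σ τ : ℝ} {f g : ℂ → ℂ} (hf : f ∈ expSpan σ) (hg : g ∈ expSpan τ) :
    f * g ∈ expSpan (σ + τ) := by
  induction hf, hg using Submodule.span_induction₂ with
  | mem_mem _ _ hs ht =>
    obtain ⟨s, hs, rfl⟩ := hs
    obtain ⟨t, ht, rfl⟩ := ht
    convert exp_mem_expSpan (t := s + t) ⟨add_nonneg hs.1 ht.1, add_le_add hs.2 ht.2⟩ using 2
    rw [Pi.mul_apply, ← Complex.exp_add]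
    push_cast
    ring_nf
  | zero_left => simp
  | zero_right => simp
  | add_left _ _ _ _ _ _ h₁ h₂ => rw [add_mul]; exact add_mem h₁ h₂
  | add_right _ _ _ _ _ _ h₁ h₂ => rw [mul_add]; exact add_mem h₁ h₂
  | smul_left c _ _ _ _ h => rw [smul_mul_assoc]; exact Submodule.smul_mem _ c h
  | smul_right c _ _ _ _ h => rw [mul_smul_comm]; exact Submodule.smul_mem _ c h

lemma comp_mul_mem_expSpan {τ : ℝ} {f : ℂ → ℂ} (hf : f ∈ expSpan τ) {c : ℝ} (hc : 0 ≤ c) :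
    (fun z : ℂ ↦ f (c * z)) ∈ expSpan (c * τ) := by
  induction hf using Submodule.span_induction with
  | mem _ ht =>
    obtain ⟨t, ht, rfl⟩ := ht
    convert exp_mem_expSpan (t := c * t)
      ⟨mul_nonneg hc ht.1, mul_le_mul_of_nonneg_left ht.2 hc⟩ using 2
    push_cast
    ring_nf
  | zero => exact zero_mem _
  | add _ _ _ _ h₁ h₂ => exact add_mem h₁ h₂
  | smul a _ _ h => exact Submodule.smul_mem _ a h

end ExpSpan

section DyadicProduct

/-- The partial product `∏_{j=1}^n A_j(2^{-j} z)` of the infinite product of the mask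
functions `A_j` of a nonstationary refinement scheme. -/
noncomputable def dyadicProduct (A : ℕ → ℂ → ℂ) (n : ℕ) (z : ℂ) : ℂ :=
  ∏ j ∈ Finset.Icc 1 n, A j ((2 : ℂ) ^ (-(j : ℤ)) * z)

variable {A : ℕ → ℂ → ℂ}

lemma dyadicProduct_succ (A : ℕ → ℂ → ℂ) (n : ℕ) (z : ℂ) :
    dyadicProduct A (n + 1) z =
      dyadicProduct A n z * A (n + 1) ((2 : ℂ) ^ (-((n + 1 : ℕ) : ℤ)) * z) :=
  Finset.prod_Icc_succ_top n.succ_pos _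

lemma dyadicProduct_add (A : ℕ → ℂ → ℂ) (m n : ℕ) (z : ℂ) :
    dyadicProduct A (m + n) z =
      dyadicProduct A m z *
        dyadicProduct (fun j ↦ A (m + j)) n ((2 : ℂ) ^ (-(m : ℤ)) * z) := by
  induction n with
  | zero => simp [dyadicProduct]
  | succ n ih =>
    rw [← add_assoc, dyadicProduct_succ, dyadicProduct_succ, ih, mul_assoc, ← mul_assoc _ _ z,
      ← zpow_add₀ two_ne_zero]
    push_cast
    ring_nf

lemma dyadicProduct_periodic (hA : ∀ j, Function.Periodic (A j) 1) (n : ℕ) :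
    Function.Periodic (dyadicProduct A n) (2 ^ n) := by
  intro z
  refine Finset.prod_congr rfl fun j hj ↦ ?_
  have hpow : (2 : ℂ) ^ (-(j : ℤ)) * 2 ^ n = (2 ^ (n - j) : ℕ) := by
    rw [← zpow_natCast (2 : ℂ) n, ← zpow_add₀ two_ne_zero, neg_add_eq_sub,
      ← Nat.cast_sub (Finset.mem_Icc.1 hj).2]
    norm_cast
  rw [mul_add, hpow]
  simpa using (hA j).nat_mul (2 ^ (n - j)) ((2 : ℂ) ^ (-(j : ℤ)) * z)

lemma dyadicProduct_mem_expSpan {τ : ℝ} (hτ : 0 ≤ τ) (hA : ∀ j, A j ∈ expSpan τ) (n : ℕ) :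
    dyadicProduct A n ∈ expSpan τ := by
  suffices h : dyadicProduct A n ∈ expSpan ((1 - 2 ^ (-(n : ℤ))) * τ) from
    expSpan_mono (mul_le_of_le_one_left hτ (sub_le_self _ (by positivity))) h
  induction n with
  | zero =>
    convert one_mem_expSpan (τ := (1 - 2 ^ (-((0 : ℕ) : ℤ))) * τ) (by simp)
    ext z
    simp [dyadicProduct]
  | succ n ih =>
    have hstep := mul_mem_expSpan ih
      (comp_mul_mem_expSpan (hA (n + 1)) (c := 2 ^ (-((n + 1 : ℕ) : ℤ))) (by positivity))
    have hτ' : (1 - 2 ^ (-(n : ℤ))) * τ + 2 ^ (-((n + 1 : ℕ) : ℤ)) * τ =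
        (1 - 2 ^ (-((n + 1 : ℕ) : ℤ))) * τ := by
      rw [Nat.cast_succ, neg_add, zpow_add₀ two_ne_zero]
      ring
    rw [hτ'] at hstep
    convert hstep using 1
    ext z
    simp [dyadicProduct_succ]

end DyadicProduct

section FourierCoefficients

variable {T : ℝ} [Fact (0 < T)]

lemma norm_fourierCoeff_le {f : AddCircle T → ℂ} {C : ℝ} (hf : ∀ x, ‖f x‖ ≤ C) (n : ℤ) :
    ‖fourierCoeff f n‖ ≤ C := by
  simpa [fourierCoeff] using norm_integral_le_of_norm_le_const (μ := AddCircle.haarAddCircle)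
    (f := fun t ↦ fourier (-n) t • f t) (.of_forall fun t ↦ by
      rw [norm_smul, fourier_apply, Circle.norm_coe, one_mul]
      exact hf t)

lemma fourierCoeff_of_hasSum {ι : Type*} {c : ι → ℂ} {e : ι → ℤ} (he : e.Injective)
    {f : C(AddCircle T, ℂ)} (hf : HasSum (fun i ↦ c i • fourier (e i)) f) (i : ι) :
    fourierCoeff f (e i) = c i := by
  classical
  let coeff : C(AddCircle T, ℂ) →L[ℂ] ℂ :=
    innerSL ℂ (fourierLp 2 (e i)) ∘L ContinuousMap.toLp 2 AddCircle.haarAddCircle ℂ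
  have hcoeff (g : C(AddCircle T, ℂ)) : coeff g = fourierCoeff g (e i) := by
    rw [← fourierCoeff_toLp, ← fourierBasis_repr, HilbertBasis.repr_apply_apply, coe_fourierBasis]
    rfl
  have hsum := hf.mapL coeff
  have hterm (j : ι) : coeff (c j • fourier (e j)) = if j = i then c i else 0 := by
    rw [map_smul, hcoeff, fourierCoeff_fourier, Pi.single_apply]
    rcases eq_or_ne j i with rfl | hji
    · simp
    · simp [hji, he.ne hji.symm]
  simp only [hterm, hcoeff] at hsum
  exact hsum.unique (hasSum_ite_eq i (c i))

end FourierCoefficients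

section TrigPoly

/-- The trigonometric polynomial `∑_{m=0}^N c_m e^{-2πi m y}`, as an entire function of `y`. -/
noncomputable def trigPoly (N : ℕ) (c : ℕ → ℂ) (y : ℂ) : ℂ :=
  ∑ m ∈ Finset.range (N + 1), c m * exp (-(2 * π * I * m * y))

variable {N : ℕ} {c : ℕ → ℂ} {C : ℝ}

lemma trigPoly_periodic (N : ℕ) (c : ℕ → ℂ) : Function.Periodic (trigPoly N c) 1 := by
  intro y
  refine Finset.sum_congr rfl fun m _ ↦ ?_
  have hexp : exp (-(2 * π * I * m * 1)) = 1 :=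
    Complex.exp_eq_one_iff.2 ⟨-(m : ℤ), by push_cast; ring⟩
  rw [mul_add, neg_add, Complex.exp_add, hexp, mul_one]

lemma trigPoly_mem_expSpan (N : ℕ) (c : ℕ → ℂ) : trigPoly N c ∈ expSpan N := by
  have hsum : trigPoly N c = ∑ m ∈ Finset.range (N + 1), c m • fun z : ℂ ↦
      exp (-(2 * π * I * ((m : ℝ) : ℂ) * z)) := by
    ext z
    simp [trigPoly]
  rw [hsum]
  refine Submodule.sum_mem _ fun m hm ↦ Submodule.smul_mem _ _ (exp_mem_expSpan ?_)
  exact ⟨m.cast_nonneg, by exact_mod_cast Finset.mem_range_succ_iff.1 hm⟩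

lemma norm_coeff_le_of_norm_trigPoly_le (h : ∀ y : ℝ, ‖trigPoly N c y‖ ≤ C) {m : ℕ}
    (hm : m ∈ Finset.range (N + 1)) : ‖c m‖ ≤ C := by
  let f : C(UnitAddCircle, ℂ) := ∑ n ∈ Finset.range (N + 1), c n • fourier (-(n : ℤ))
  have hf (y : ℝ) : f y = trigPoly N c y := by
    simp only [f, trigPoly, ContinuousMap.sum_apply, ContinuousMap.smul_apply, fourier_coe_apply,
      smul_eq_mul]
    refine Finset.sum_congr rfl fun n _ ↦ ?_
    push_cast
    ring_nf
  have hcoeff : fourierCoeff f (-(m : ℤ)) = c m :=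
    fourierCoeff_of_hasSum (ι := Finset.range (N + 1)) (c := fun n ↦ c n) (e := fun n ↦ -(n : ℤ))
      (neg_injective.comp (Nat.cast_injective.comp Subtype.val_injective))
      (Finset.hasSum _ fun n : ℕ ↦ c n • fourier (-(n : ℤ))) ⟨m, hm⟩
  rw [← hcoeff]
  refine norm_fourierCoeff_le (fun x ↦ ?_) _
  obtain ⟨y, rfl⟩ := QuotientAddGroup.mk_surjective x
  exact (hf y).symm ▸ h y

lemma norm_trigPoly_le (hc : ∀ m ∈ Finset.range (N + 1), ‖c m‖ ≤ C) {b : ℝ} {y : ℂ}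
    (hy : |y.im| ≤ b) : ‖trigPoly N c y‖ ≤ (N + 1) * (C * Real.exp (2 * π * N * b)) := by
  suffices h : ∀ m ∈ Finset.range (N + 1),
      ‖c m * exp (-(2 * π * I * m * y))‖ ≤ C * Real.exp (2 * π * N * b) by
    simpa [trigPoly] using norm_sum_le_of_le _ h
  intro m hm
  have hmN : (m : ℝ) ≤ N := by exact_mod_cast Finset.mem_range_succ_iff.1 hm
  have hC : 0 ≤ C := (norm_nonneg _).trans (hc m hm)
  rw [norm_mul, Complex.norm_exp]
  gcongr
  · exact hc m hm
  · have hb : 0 ≤ b := (abs_nonneg _).trans hy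
    calc (-(2 * π * I * m * y)).re = 2 * π * m * y.im := by simp
      _ ≤ 2 * π * m * b := by gcongr; exact (le_abs_self _).trans hy
      _ ≤ 2 * π * N * b := by gcongr

lemma norm_trigPoly_sub_le (hc : ∀ m ∈ Finset.range (N + 1), ‖c m‖ ≤ C) {y : ℂ} (hy : ‖y‖ ≤ 1) :
    ‖trigPoly N c y - trigPoly N c 0‖ ≤
      (N + 1) * (C * (2 * π * N * Real.exp (2 * π * N))) * ‖y‖ := by
  suffices h : ∀ m ∈ Finset.range (N + 1),
      ‖c m * (exp (-(2 * π * I * m * y)) - 1)‖ ≤ C * (2 * π * N * Real.exp (2 * π * N)) * ‖y‖ by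
    simpa [trigPoly, mul_sub, mul_assoc] using norm_sum_le_of_le _ h
  intro m hm
  have hmN : (m : ℝ) ≤ N := by exact_mod_cast Finset.mem_range_succ_iff.1 hm
  have hC : 0 ≤ C := (norm_nonneg _).trans (hc m hm)
  set w := -(2 * π * I * m * y)
  have hw : ‖w‖ ≤ 2 * π * N * ‖y‖ := by
    simp only [w, norm_neg, norm_mul, Complex.norm_ofNat, Complex.norm_real, Real.norm_eq_abs,
      abs_of_pos Real.pi_pos, Complex.norm_I, Complex.norm_natCast, mul_one]
    gcongr
  have hw' : ‖w‖ ≤ 2 * π * N := hw.trans (mul_le_of_le_one_right (by positivity) hy)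
  calc ‖c m * (exp w - 1)‖ ≤ C * (‖w‖ * Real.exp ‖w‖) := by
        rw [norm_mul]
        gcongr
        · exact hc m hm
        · simpa using Complex.norm_exp_sub_sum_le_norm_mul_exp w 1
    _ ≤ C * (2 * π * N * ‖y‖ * Real.exp (2 * π * N)) := by gcongr
    _ = _ := by ring

end TrigPoly

section Growth

-- For `y ≤ 1` this is Bernoulli's inequality; for `1 ≤ y` each factor `(1 + 2y) / (1 + y)` is at
-- least `3 / 2`.
lemma exists_mul_one_add_pow_le (B K : ℝ) : ∃ M : ℕ, ∀ a y : ℝ, 0 ≤ y → a ≤ B →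
    (y ≤ 1 → a ≤ 1 + K * y) → a * (1 + y) ^ M ≤ (1 + 2 * y) ^ M := by
  obtain ⟨M₁, hM₁⟩ := pow_unbounded_of_one_lt B (show (1 : ℝ) < 3 / 2 by norm_num)
  obtain ⟨M₂, hM₂⟩ := exists_nat_ge (2 * K)
  refine ⟨max M₁ M₂, fun a y hy haB haK ↦ ?_⟩
  suffices ∃ r, a ≤ r ^ max M₁ M₂ ∧ 0 ≤ r ∧ r * (1 + y) ≤ 1 + 2 * y by
    obtain ⟨r, har, hr, hry⟩ := this
    calc a * (1 + y) ^ max M₁ M₂ ≤ r ^ max M₁ M₂ * (1 + y) ^ max M₁ M₂ := by gcongr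
      _ = (r * (1 + y)) ^ max M₁ M₂ := (mul_pow ..).symm
      _ ≤ (1 + 2 * y) ^ max M₁ M₂ := by gcongr
  rcases le_total y 1 with hy1 | hy1
  · refine ⟨1 + y / 2, ?_, by positivity, by nlinarith⟩
    calc a ≤ 1 + K * y := haK hy1
      _ ≤ 1 + (max M₁ M₂ : ℕ) * (y / 2) := by
        have : (M₂ : ℝ) ≤ (max M₁ M₂ : ℕ) := by exact_mod_cast le_max_right M₁ M₂
        nlinarith
      _ ≤ (1 + y / 2) ^ max M₁ M₂ := one_add_mul_le_pow (by linarith) _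
  · refine ⟨3 / 2, ?_, by norm_num, by linarith⟩
    calc a ≤ (3 / 2) ^ M₁ := haB.trans hM₁.le
      _ ≤ (3 / 2) ^ max M₁ M₂ := pow_le_pow_right₀ (by norm_num) (le_max_left ..)

-- The factors `(1 + 2y)^M / (1 + y)^M` telescope along `y = 2^{-j} ‖z‖`.
lemma norm_dyadicProduct_mul_le {A : ℕ → ℂ → ℂ} {b : ℝ} {M : ℕ}
    (hA : ∀ j y, |y.im| ≤ b → ‖A j y‖ * (1 + ‖y‖) ^ M ≤ (1 + 2 * ‖y‖) ^ M)
    {z : ℂ} (hz : |z.im| ≤ b) (n : ℕ) :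
    ‖dyadicProduct A n z‖ * (1 + ‖(2 : ℂ) ^ (-(n : ℤ)) * z‖) ^ M ≤ (1 + ‖z‖) ^ M := by
  induction n with
  | zero => simp [dyadicProduct]
  | succ n ih =>
    set y := (2 : ℂ) ^ (-((n + 1 : ℕ) : ℤ)) * z with hy
    have him : |y.im| ≤ b := by
      have hscale : y.im = 2 ^ (-((n + 1 : ℕ) : ℤ)) * z.im := by
        rw [hy, ← Complex.im_ofReal_mul, Complex.ofReal_zpow, Complex.ofReal_ofNat]
      rw [hscale, abs_mul, abs_of_pos (by positivity)]
      refine (mul_le_of_le_one_left (abs_nonneg _) ?_).trans hz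
      exact zpow_le_one_of_nonpos₀ one_le_two (by simp)
    have hdouble : ‖(2 : ℂ) ^ (-(n : ℤ)) * z‖ = 2 * ‖y‖ := by
      rw [hy, Nat.cast_succ, neg_add, zpow_add₀ two_ne_zero, zpow_neg_one,
        mul_right_comm, norm_mul _ (2 : ℂ)⁻¹, norm_inv, Complex.norm_ofNat]
      ring
    rw [hdouble] at ih
    calc ‖dyadicProduct A (n + 1) z‖ * (1 + ‖y‖) ^ M
        = ‖dyadicProduct A n z‖ * (‖A (n + 1) y‖ * (1 + ‖y‖) ^ M) := by
          rw [dyadicProduct_succ, norm_mul, mul_assoc]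
      _ ≤ ‖dyadicProduct A n z‖ * (1 + 2 * ‖y‖) ^ M := by gcongr; exact hA _ _ him
      _ ≤ (1 + ‖z‖) ^ M := ih

lemma exists_norm_dyadicProduct_trigPoly_le {N : ℕ} {C : ℝ} {c : ℕ → ℕ → ℂ}
    (hc0 : ∀ j, trigPoly N (c j) 0 = 1) (hc : ∀ j, ∀ y : ℝ, ‖trigPoly N (c j) y‖ ≤ C) (b : ℝ) :
    ∃ M : ℕ, ∀ n, ∀ z : ℂ, |z.im| ≤ b →
      ‖dyadicProduct (fun j ↦ trigPoly N (c j)) n z‖ ≤ (1 + ‖z‖) ^ M := by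
  have hcoeff (j) : ∀ m ∈ Finset.range (N + 1), ‖c j m‖ ≤ C :=
    fun _ ↦ norm_coeff_le_of_norm_trigPoly_le (hc j)
  obtain ⟨M, hM⟩ := exists_mul_one_add_pow_le ((N + 1) * (C * Real.exp (2 * π * N * b)))
    ((N + 1) * (C * (2 * π * N * Real.exp (2 * π * N))))
  refine ⟨M, fun n z hz ↦ ?_⟩
  refine le_trans ?_ (norm_dyadicProduct_mul_le (fun j y hy ↦ hM _ _ (norm_nonneg y)
    (norm_trigPoly_le (hcoeff j) hy) fun hy1 ↦ ?_) hz n)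
  · exact le_mul_of_one_le_right (norm_nonneg _) (one_le_pow₀ (by simp))
  · calc ‖trigPoly N (c j) y‖ = ‖1 + (trigPoly N (c j) y - trigPoly N (c j) 0)‖ := by simp [hc0]
      _ ≤ 1 + ‖trigPoly N (c j) y - trigPoly N (c j) 0‖ := by simpa using norm_add_le (1 : ℂ) _
      _ ≤ _ := by gcongr; exact norm_trigPoly_sub_le (hcoeff j) hy1

end Growth

section Finite

lemma exists_support_subset_eq_zero {K ι κ : Type*} [DivisionRing K] (f : (ι → K) →ₗ[K] (κ → K))
    {s : Finset ι} {t : Finset κ} (h : t.card < s.card) :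
    ∃ γ : ι → K, γ ≠ 0 ∧ Function.support γ ⊆ s ∧ ∀ k ∈ t, f γ k = 0 := by
  let extend : (s → K) →ₗ[K] (ι → K) := Function.ExtendByZero.linearMap K Subtype.val
  let restrict : (κ → K) →ₗ[K] (t → K) := LinearMap.funLeft K K Subtype.val
  obtain ⟨v, hv, hv0⟩ := Submodule.exists_mem_ne_zero_of_ne_bot
    (LinearMap.ker_ne_bot_of_finrank_lt (f := restrict ∘ₗ f ∘ₗ extend) (by simpa using h))
  have hextend (i : s) : extend v i = v i := Subtype.val_injective.extend_apply v (0 : ι → K) i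
  refine ⟨extend v, fun h0 ↦ hv0 (funext fun i ↦ ?_), fun i hi ↦ ?_, fun k hk ↦ congrFun hv ⟨k, hk⟩⟩
  · rw [← hextend, h0]
    rfl
  · by_contra his
    exact hi (Function.extend_apply' v (0 : ι → K) i fun ⟨j, hj⟩ ↦ his (hj ▸ j.2))

lemma exists_injOn_intCast_zmod_two_pow (s : Finset ℤ) :
    ∃ J : ℕ, Set.InjOn (fun i : ℤ ↦ (i : ZMod (2 ^ J))) s := by
  refine ⟨2 * ∑ i ∈ s, i.natAbs, fun i hi k hk hik ↦ sub_eq_zero.1 ?_⟩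
  have hbound {l : ℤ} (hl : l ∈ (s : Set ℤ)) : l.natAbs ≤ ∑ i ∈ s, i.natAbs :=
    Finset.single_le_sum (f := Int.natAbs) (fun _ _ ↦ Nat.zero_le _) hl
  refine Int.eq_zero_of_abs_lt_dvd ((ZMod.intCast_eq_intCast_iff_dvd_sub _ _ _).1 hik.symm) ?_
  have hpow : 2 * ∑ i ∈ s, i.natAbs < 2 ^ (2 * ∑ i ∈ s, i.natAbs) := Nat.lt_two_pow_self
  have := hbound hi
  have := hbound hk
  rw [Int.abs_eq_natAbs]
  exact_mod_cast (by omega : (i - k).natAbs ≤ 2 * ∑ i ∈ s, i.natAbs).trans_lt hpow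

end Finite

section Poisson

lemma summable_one_add_abs_pow_mul_norm (η : 𝓢(ℝ, ℂ)) (M : ℕ) :
    Summable fun l : ℤ ↦ (1 + |(l : ℝ)|) ^ M * ‖η l‖ := by
  obtain ⟨D, hD⟩ : ∃ D, ∀ x : ℝ, (1 + ‖x‖) ^ (M + 2) * ‖η x‖ ≤ D :=
    ⟨_, fun x ↦ by
      simpa using SchwartzMap.one_add_le_sup_seminorm_apply (𝕜 := ℂ) (m := (M + 2, 0))
        le_rfl le_rfl η x⟩
  have hsum : Summable fun l : ℤ ↦ D * (1 / (l : ℝ) ^ 2) :=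
    (Real.summable_one_div_int_pow.2 one_lt_two).mul_left D
  refine hsum.of_norm_bounded_eventually ?_
  filter_upwards [(Set.finite_singleton (0 : ℤ)).compl_mem_cofinite] with l hl
  have hl0 : (l : ℝ) ≠ 0 := Int.cast_ne_zero.2 hl
  rw [Real.norm_of_nonneg (by positivity), mul_one_div, le_div_iff₀ (by positivity)]
  calc (1 + |(l : ℝ)|) ^ M * ‖η l‖ * (l : ℝ) ^ 2
      ≤ (1 + |(l : ℝ)|) ^ M * ‖η l‖ * (1 + |(l : ℝ)|) ^ 2 := by
        rw [← sq_abs (l : ℝ)]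
        gcongr
        linarith
    _ = (1 + ‖(l : ℝ)‖) ^ (M + 2) * ‖η l‖ := by rw [Real.norm_eq_abs]; ring
    _ ≤ D := hD l

lemma hasSum_fourier_int (η : 𝓢(ℝ, ℂ)) (x : ℝ) :
    HasSum (fun l : ℤ ↦ 𝓕 η l * fourier l (x : UnitAddCircle)) (∑' n : ℤ, η (x + n)) := by
  rw [SchwartzMap.tsum_eq_tsum_fourier]
  refine Summable.hasSum (.of_norm ((summable_one_add_abs_pow_mul_norm (𝓕 η) 0).congr fun l ↦ ?_))
  rw [norm_mul, fourier_apply, Circle.norm_coe, pow_zero, one_mul, mul_one]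

lemma zmod_eq_inv_mul_sum_dft_mul_fourier {L : ℕ} [NeZero L] (β : ZMod L → ℂ) (l : ℤ) :
    β l = (L : ℂ)⁻¹ * ∑ k, ZMod.dft β k * fourier l ((k.val / L : ℝ) : UnitAddCircle) := by
  conv_lhs => rw [← ZMod.dft.symm_apply_apply β, ZMod.invDFT_apply, smul_eq_mul]
  congr 1
  refine Finset.sum_congr rfl fun k _ ↦ ?_
  have hk : k * (l : ZMod L) = ((k.val * l : ℤ) : ZMod L) := by simp
  rw [hk, ZMod.stdAddChar_coe, smul_eq_mul, mul_comm, fourier_coe_apply]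
  push_cast
  ring_nf

lemma hasSum_zmod_mul_fourier_int {L : ℕ} [NeZero L] (β : ZMod L → ℂ) (η : 𝓢(ℝ, ℂ)) (x : ℝ) :
    HasSum (fun l : ℤ ↦ β l * (𝓕 η l * fourier l (x : UnitAddCircle)))
      ((L : ℂ)⁻¹ * ∑ k, ZMod.dft β k * ∑' n : ℤ, η (x + k.val / L + n)) := by
  have hsum := (hasSum_sum fun k (_ : k ∈ Finset.univ) ↦
    (hasSum_fourier_int η (x + k.val / L)).mul_left (ZMod.dft β k)).mul_left (L : ℂ)⁻¹
  refine hsum.congr_fun fun l ↦ ?_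
  rw [zmod_eq_inv_mul_sum_dft_mul_fourier β l, mul_assoc, Finset.sum_mul]
  congr 1
  refine Finset.sum_congr rfl fun k _ ↦ ?_
  simp only [AddCircle.coe_add, fourier_apply, smul_add, AddCircle.toCircle_add, Circle.coe_mul]
  ring

lemma mem_Icc_of_div_sub_mem_Ioo {L N : ℕ} [NeZero L] {t : ℝ} (ht : t ∈ Set.Icc 0 (N / L : ℝ))
    {m : ℤ} (hm : m / L - t ∈ Set.Ioo 0 (1 / L : ℝ)) : m ∈ Finset.Icc 1 (N : ℤ) := by
  have hL : (0 : ℝ) < L := Nat.cast_pos.2 (NeZero.pos L)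
  have hlower : (0 : ℝ) < m := by
    rw [← div_pos_iff_of_pos_right hL]
    exact ht.1.trans_lt (sub_pos.1 hm.1)
  have hupper : (m : ℝ) < N + 1 := by
    rw [← div_lt_div_iff_of_pos_right hL, add_div]
    linarith [hm.2, ht.2]
  exact Finset.mem_Icc.2 ⟨by exact_mod_cast hlower, Int.le_of_lt_add_one (by exact_mod_cast hupper)⟩

-- By Poisson summation the sum is a combination of the values `η (m / L - t)` with weights
-- `𝓕 β m`, and such a value can be nonzero only if `1 ≤ m ≤ N`.
lemma hasSum_zmod_mul_exp_mul_fourier_eq_zero {L N : ℕ} [NeZero L] {β : ZMod L → ℂ}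
    (hβ : ∀ m ∈ Finset.Icc 1 (N : ℤ), ZMod.dft β m = 0) {η : 𝓢(ℝ, ℂ)}
    (hη : Function.support η ⊆ Set.Ioo 0 (1 / L : ℝ)) {t : ℝ} (ht : t ∈ Set.Icc 0 (N / L : ℝ)) :
    HasSum (fun l : ℤ ↦ β l * exp (-(2 * π * I * t * l)) * 𝓕 η l) 0 := by
  have hvanish (k : ZMod L) : ZMod.dft β k * ∑' n : ℤ, η (-t + k.val / L + n) = 0 := by
    rw [← tsum_mul_left, ← tsum_zero]
    refine tsum_congr fun n ↦ mul_eq_zero.2 (or_iff_not_imp_right.2 fun hn ↦ ?_)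
    have hm : -t + k.val / L + n = ((k.val + n * L : ℤ) : ℝ) / L - t := by
      have hL : (L : ℝ) ≠ 0 := NeZero.ne _
      push_cast
      field_simp
      ring
    have hk : ((k.val + n * L : ℤ) : ZMod L) = k := by simp
    rw [← hk]
    exact hβ _ (mem_Icc_of_div_sub_mem_Ioo ht (hm ▸ hη hn))
  have hsum := hasSum_zmod_mul_fourier_int β η (-t)
  simp only [hvanish, Finset.sum_const_zero, mul_zero] at hsum
  refine hsum.congr_fun fun l ↦ ?_
  rw [fourier_coe_apply, mul_assoc, mul_comm (𝓕 η l)]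
  push_cast
  ring_nf

lemma hasSum_zmod_mul_expSpan_mul_fourier_eq_zero {L N : ℕ} [NeZero L] {β : ZMod L → ℂ}
    (hβ : ∀ m ∈ Finset.Icc 1 (N : ℤ), ZMod.dft β m = 0) {η : 𝓢(ℝ, ℂ)}
    (hη : Function.support η ⊆ Set.Ioo 0 (1 / L : ℝ)) {g : ℂ → ℂ} (hg : g ∈ expSpan (N / L))
    (α : ℂ) :
    HasSum (fun l : ℤ ↦ β l * g (α + l) * 𝓕 η l) 0 := by
  induction hg using Submodule.span_induction with
  | mem _ h =>
    obtain ⟨t, ht, rfl⟩ := h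
    have hsum := (hasSum_zmod_mul_exp_mul_fourier_eq_zero hβ hη ht).mul_left
      (exp (-(2 * π * I * t * α)))
    rw [mul_zero] at hsum
    refine hsum.congr_fun fun l ↦ ?_
    simp only [mul_add, neg_add, Complex.exp_add]
    ring
  | zero => simp
  | add g h _ _ hg hh => simpa [mul_add, add_mul] using hg.add hh
  | smul a g _ hg => simpa [mul_assoc, mul_left_comm] using hg.mul_left a

end Poisson

section Uniqueness

variable {d : ℤ → ℂ} {D q : ℝ}

lemma summable_pow_natAbs {r : ℝ} (h₀ : 0 ≤ r) (h₁ : r < 1) :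
    Summable fun n : ℤ ↦ r ^ n.natAbs := by
  refine .of_nat_of_neg ?_ ?_ <;> simpa using summable_geometric_of_lt_one h₀ h₁

lemma summable_norm_of_norm_le_mul_pow_natAbs (hq : q ∈ Set.Ioo 0 1)
    (hd : ∀ n, ‖d n‖ ≤ D * q ^ n.natAbs) : Summable fun n ↦ ‖d n‖ :=
  ((summable_pow_natAbs hq.1.le hq.2).mul_left D).of_nonneg_of_le (fun _ ↦ norm_nonneg _) hd

lemma norm_mul_exp_le {d : ℂ} {n : ℤ} (hd : ‖d‖ ≤ D * q ^ n.natAbs) {δ : ℝ} {z : ℂ}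
    (hz : |z.im| ≤ δ) :
    ‖d * exp (-(2 * π * I * n * z))‖ ≤ D * (q * Real.exp (2 * π * δ)) ^ n.natAbs := by
  have him : n * z.im ≤ n.natAbs * δ := by
    rw [Nat.cast_natAbs, Int.cast_abs]
    calc n * z.im ≤ |(n : ℝ)| * |z.im| := (le_abs_self _).trans (abs_mul _ _).le
      _ ≤ |(n : ℝ)| * δ := by gcongr
  have hre : (-(2 * π * I * n * z)).re ≤ n.natAbs * (2 * π * δ) := by
    calc (-(2 * π * I * n * z)).re = 2 * π * (n * z.im) := by simp [mul_assoc]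
      _ ≤ 2 * π * (n.natAbs * δ) := by gcongr
      _ = n.natAbs * (2 * π * δ) := by ring
  calc ‖d * exp (-(2 * π * I * n * z))‖
      ≤ D * q ^ n.natAbs * Real.exp (n.natAbs * (2 * π * δ)) := by
        rw [norm_mul, Complex.norm_exp]
        gcongr
        exact (norm_nonneg d).trans hd
    _ = D * (q * Real.exp (2 * π * δ)) ^ n.natAbs := by
        rw [Real.exp_nat_mul, mul_pow, mul_assoc]

lemma exists_differentiableOn_strip_tsum_mul_exp (hq : q ∈ Set.Ioo 0 1)
    (hd : ∀ n, ‖d n‖ ≤ D * q ^ n.natAbs) :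
    ∃ δ > 0, DifferentiableOn ℂ (fun z ↦ ∑' n : ℤ, d n * exp (-(2 * π * I * n * z)))
      {z | |z.im| < δ} := by
  obtain ⟨r, hqr, hr⟩ := exists_between hq.2
  have hr₀ : 0 < r := hq.1.trans hqr
  have hδ : q * Real.exp (2 * π * (Real.log (r / q) / (2 * π))) = r := by
    rw [mul_div_cancel₀ _ Real.two_pi_pos.ne', Real.exp_log (div_pos hr₀ hq.1),
      mul_div_cancel₀ _ hq.1.ne']
  refine ⟨Real.log (r / q) / (2 * π),
    div_pos (Real.log_pos ((one_lt_div hq.1).2 hqr)) Real.two_pi_pos, ?_⟩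
  refine Complex.differentiableOn_tsum_of_summable_norm
    ((summable_pow_natAbs hr₀.le hr).mul_left D) (fun n ↦ by fun_prop)
    (isOpen_lt (by fun_prop) continuous_const) fun n z hz ↦ ?_
  simpa only [hδ] using norm_mul_exp_le (hd n) (le_of_lt hz)

lemma analyticOnNhd_tsum_mul_exp (hq : q ∈ Set.Ioo 0 1) (hd : ∀ n, ‖d n‖ ≤ D * q ^ n.natAbs) :
    AnalyticOnNhd ℝ (fun x : ℝ ↦ ∑' n : ℤ, d n * exp (-(2 * π * I * n * x))) Set.univ := by
  obtain ⟨δ, hδ, hdiff⟩ := exists_differentiableOn_strip_tsum_mul_exp hq hd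
  intro x _
  have han := hdiff.analyticOnNhd (isOpen_lt (by fun_prop) continuous_const) (x : ℂ) (by simpa)
  exact han.restrictScalars.comp (Complex.ofRealCLM.analyticAt x)

lemma integral_mul_tsum_mul_exp (hd : Summable fun n ↦ ‖d n‖) (η : 𝓢(ℝ, ℂ)) :
    ∫ x : ℝ, η x * ∑' n : ℤ, d n * exp (-(2 * π * I * n * x)) =
      ∑' n : ℤ, d n * 𝓕 η n := by
  have hterm (n : ℤ) (x : ℝ) :
      η x * (d n * exp (-(2 * π * I * n * x))) = d n * (𝐞 (-(x * n)) • η x) := by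
    rw [Circle.smul_def, Real.fourierChar_apply, smul_eq_mul]
    push_cast
    ring_nf
  have hint (n : ℤ) : Integrable fun x : ℝ ↦ d n * (𝐞 (-(x * n)) • η x) := by
    refine Integrable.const_mul ?_ _
    simpa [mul_comm] using
      (Real.fourierIntegral_convergent_iff (n : ℝ)).2 (η.integrable (μ := volume))
  simp_rw [← tsum_mul_left, hterm]
  rw [← integral_tsum_of_summable_integral_norm hint]
  · simp_rw [integral_const_mul, SchwartzMap.fourier_coe, Real.fourier_real_eq]
  · simpa [norm_mul, Circle.norm_smul, integral_const_mul] using hd.mul_right _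

lemma eq_zero_of_tsum_mul_exp_eq_zero (hd : Summable fun n ↦ ‖d n‖)
    (h : ∀ x : ℝ, ∑' n : ℤ, d n * exp (-(2 * π * I * n * x)) = 0) : d = 0 := by
  have hsum : Summable fun n : ℤ ↦ d n • (fourier (-n) : C(UnitAddCircle, ℂ)) :=
    .of_norm (by simpa only [norm_smul, fourier_norm, mul_one] using hd)
  have hzero : ∑' n : ℤ, d n • (fourier (-n) : C(UnitAddCircle, ℂ)) = 0 := by
    ext t
    obtain ⟨x, rfl⟩ := QuotientAddGroup.mk_surjective t
    refine (ContinuousMap.tsum_apply hsum _).symm.trans (.trans ?_ (h x))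
    refine tsum_congr fun n ↦ ?_
    rw [ContinuousMap.smul_apply, smul_eq_mul, fourier_coe_apply]
    push_cast
    ring_nf
  ext n
  rw [← fourierCoeff_of_hasSum neg_injective hsum.hasSum n, hzero]
  simp [fourierCoeff]

lemma eq_zero_of_tsum_mul_fourier_eq_zero (hq : q ∈ Set.Ioo 0 1)
    (hd : ∀ n, ‖d n‖ ≤ D * q ^ n.natAbs) {U : Set ℝ} (hU : IsOpen U) (hUne : U.Nonempty)
    (h : ∀ η : 𝓢(ℝ, ℂ), tsupport η ⊆ U → ∑' n : ℤ, d n * 𝓕 η n = 0) : d = 0 := by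
  have hd_summable := summable_norm_of_norm_le_mul_pow_natAbs hq hd
  refine eq_zero_of_tsum_mul_exp_eq_zero hd_summable ?_
  set f := fun x : ℝ ↦ ∑' n : ℤ, d n * exp (-(2 * π * I * n * x))
  have hf : AnalyticOnNhd ℝ f Set.univ := analyticOnNhd_tsum_mul_exp hq hd
  have hfc : Continuous f := continuousOn_univ.1 hf.continuousOn
  have hae : ∀ᵐ x, x ∈ U → f x = 0 := by
    refine hU.ae_eq_zero_of_integral_contDiff_smul_eq_zero
      (hfc.locallyIntegrable.locallyIntegrableOn U) fun g hg hgc hgU ↦ ?_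
    have hgc' : HasCompactSupport fun x ↦ (g x : ℂ) := hgc.comp_left Complex.ofReal_zero
    let η : 𝓢(ℝ, ℂ) := hgc'.toSchwartzMap (Complex.ofRealCLM.contDiff.comp hg)
    have hη (x : ℝ) : η x = g x := rfl
    have hηU : tsupport η ⊆ U := (closure_mono fun x hx ↦ by simpa [hη] using hx).trans hgU
    simpa [← integral_mul_tsum_mul_exp hd_summable, hη] using h η hηU
  have hfU : Set.EqOn f 0 U :=
    Measure.eqOn_open_of_ae_eq ((ae_restrict_iff' hU.measurableSet).2 hae) hU hfc.continuousOn
      continuousOn_const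
  obtain ⟨x, hx⟩ := hUne
  exact congrFun (hf.eq_of_eventuallyEq analyticOnNhd_const
    (hfU.eventuallyEq_of_mem (hU.mem_nhds hx)))

end Uniqueness

section Main

lemma exists_mem_expSpan_dyadicProduct_add_eq {A : ℕ → ℂ → ℂ} {τ : ℝ} (hτ : 0 ≤ τ)
    (hA : ∀ j, A j ∈ expSpan τ) (J n : ℕ) :
    ∃ g ∈ expSpan (τ / (2 ^ J : ℕ)), ∀ z,
      dyadicProduct A (J + n) z = dyadicProduct A J z * g z := by
  have htail := comp_mul_mem_expSpan (dyadicProduct_mem_expSpan hτ (fun j ↦ hA (J + j)) n)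
    (c := 2 ^ (-(J : ℤ))) (by positivity)
  refine ⟨_, ?_, dyadicProduct_add A J n⟩
  convert htail using 2
  · rw [zpow_neg, zpow_natCast, inv_mul_eq_div]
    norm_cast
  · push_cast
    rfl

lemma periodic_add_zmod_val {f : ℂ → ℂ} {L : ℕ} [NeZero L] (hf : Function.Periodic f L) (α : ℂ)
    (l : ℤ) : f (α + (l : ZMod L).val) = f (α + l) := by
  have hval : ((l : ZMod L).val : ℤ) = l - (l / L) * L := by
    rw [ZMod.val_intCast, Int.emod_def, mul_comm]
  rw [← hf.sub_int_mul_eq (x := α + l) (l / L), add_sub_assoc]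
  congr 2
  exact_mod_cast congrArg (Int.cast : ℤ → ℂ) hval

lemma hasSum_zmod_mul_dyadicProduct_mul_fourier_eq_zero {A : ℕ → ℂ → ℂ} {N : ℕ}
    (hper : ∀ j, Function.Periodic (A j) 1) (hA : ∀ j, A j ∈ expSpan N) {α : ℂ} {J : ℕ}
    {γ : ZMod (2 ^ J) → ℂ} (hγ : ∀ m ∈ Finset.Icc 1 (N : ℤ),
      ZMod.dft ((fun k ↦ dyadicProduct A J (α + k.val)) * γ) m = 0)
    {η : 𝓢(ℝ, ℂ)} (hη : Function.support η ⊆ Set.Ioo 0 (1 / (2 ^ J : ℕ) : ℝ)) (n : ℕ) :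
    HasSum (fun l : ℤ ↦ γ l * dyadicProduct A (J + n) (α + l) * 𝓕 η l) 0 := by
  obtain ⟨g, hg, hprod⟩ := exists_mem_expSpan_dyadicProduct_add_eq N.cast_nonneg hA J n
  have hJper : Function.Periodic (dyadicProduct A J) (2 ^ J : ℕ) := by
    simpa using dyadicProduct_periodic hper J
  refine (hasSum_zmod_mul_expSpan_mul_fourier_eq_zero hγ hη hg α).congr_fun fun l ↦ ?_
  rw [hprod, Pi.mul_apply, periodic_add_zmod_val hJper]
  ring

lemma tendsto_tsum_mul_of_norm_le_mul_pow {v : ℕ → ℤ → ℂ} {w : ℤ → ℂ} {D : ℝ} {M : ℕ}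
    (hbound : ∀ n l, ‖v n l‖ ≤ D * (1 + |(l : ℝ)|) ^ M)
    (hlim : ∀ l, Tendsto (v · l) atTop (𝓝 (w l))) (η : 𝓢(ℝ, ℂ)) :
    Tendsto (fun n ↦ ∑' l : ℤ, v n l * η l) atTop (𝓝 (∑' l : ℤ, w l * η l)) := by
  refine tendsto_tsum_of_dominated_convergence
    ((summable_one_add_abs_pow_mul_norm η M).mul_left D) (fun l ↦ (hlim l).mul_const _)
    (.of_forall fun n l ↦ ?_)
  rw [norm_mul, ← mul_assoc]
  gcongr
  exact hbound n l

lemma tsum_zmod_mul_mul_fourier_eq_zero {N : ℕ} {C : ℝ} {coef : ℕ → ℕ → ℂ}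
    (h0 : ∀ j, trigPoly N (coef j) 0 = 1)
    (hbd : ∀ j, ∀ y : ℝ, ‖trigPoly N (coef j) y‖ ≤ C) {α : ℂ} {u : ℤ → ℂ}
    (hu : ∀ l : ℤ, Tendsto (fun n ↦ dyadicProduct (fun j ↦ trigPoly N (coef j)) n (α + l)) atTop
      (𝓝 (u l)))
    {J : ℕ} {γ : ZMod (2 ^ J) → ℂ} (hγ : ∀ m ∈ Finset.Icc 1 (N : ℤ),
      ZMod.dft ((fun k ↦ dyadicProduct (fun j ↦ trigPoly N (coef j)) J (α + k.val)) * γ) m = 0)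
    {η : 𝓢(ℝ, ℂ)} (hη : Function.support η ⊆ Set.Ioo 0 (1 / (2 ^ J : ℕ) : ℝ)) :
    ∑' l : ℤ, γ l * u l * 𝓕 η l = 0 := by
  obtain ⟨M, hM⟩ := exists_norm_dyadicProduct_trigPoly_le h0 hbd |α.im|
  have hbound (n : ℕ) (l : ℤ) :
      ‖γ l * dyadicProduct (fun j ↦ trigPoly N (coef j)) (J + n) (α + l)‖ ≤
        ‖γ‖ * (1 + ‖α‖) ^ M * (1 + |(l : ℝ)|) ^ M := by
    have hgrowth : 1 + ‖α + l‖ ≤ (1 + ‖α‖) * (1 + |(l : ℝ)|) := by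
      have := norm_add_le α l
      rw [Complex.norm_intCast] at this
      nlinarith [norm_nonneg α, abs_nonneg (l : ℝ)]
    calc _ ≤ ‖γ‖ * (1 + ‖α + l‖) ^ M := by
          rw [norm_mul]
          gcongr
          · exact norm_le_pi_norm γ _
          · exact hM _ _ (by simp)
      _ ≤ ‖γ‖ * ((1 + ‖α‖) * (1 + |(l : ℝ)|)) ^ M := by gcongr
      _ = _ := by rw [mul_pow, mul_assoc]
  have hlim := tendsto_tsum_mul_of_norm_le_mul_pow hbound (fun l ↦ ((hu l).comp
    (tendsto_add_atTop_nat J |>.congr fun n ↦ add_comm n J)).const_mul (γ l)) (𝓕 η)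
  refine tendsto_nhds_unique hlim (tendsto_const_nhds.congr fun n ↦ ?_)
  exact (hasSum_zmod_mul_dyadicProduct_mul_fourier_eq_zero (fun _ ↦ trigPoly_periodic N _)
    (fun _ ↦ trigPoly_mem_expSpan N _) hγ hη n).tsum_eq.symm

lemma exists_dft_mul_eq_zero {N L : ℕ} [NeZero L] (B : ZMod L → ℂ) {S : Finset (ZMod L)}
    (hS : N < S.card) :
    ∃ γ ≠ 0, Function.support γ ⊆ S ∧ ∀ m ∈ Finset.Icc 1 (N : ℤ), ZMod.dft (B * γ) m = 0 := by
  classical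
  have hcard : ((Finset.Icc 1 (N : ℤ)).image (Int.cast : ℤ → ZMod L)).card < S.card :=
    (Finset.card_image_le.trans (by simp)).trans_lt hS
  obtain ⟨γ, hγ, hsupp, hzero⟩ := exists_support_subset_eq_zero
    ((ZMod.dft (E := ℂ)).toLinearMap ∘ₗ LinearMap.mulLeft ℂ B) hcard
  exact ⟨γ, hγ, hsupp, fun m hm ↦ hzero _ (Finset.mem_image_of_mem _ hm)⟩

lemma norm_zmod_mul_le {L : ℕ} [NeZero L] {u : ℤ → ℂ} {D q : ℝ}
    (hu : ∀ l, ‖u l‖ ≤ D * q ^ l.natAbs) (γ : ZMod L → ℂ) (l : ℤ) :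
    ‖γ l * u l‖ ≤ ‖γ‖ * D * q ^ l.natAbs := by
  rw [norm_mul, mul_assoc]
  gcongr
  exacts [norm_le_pi_norm γ _, hu l]

end Main

theorem stmt_15_general {N : ℕ} {C : ℝ} {coef : ℕ → ℕ → ℂ}
    (h0 : ∀ j, trigPoly N (coef j) 0 = 1) (hbd : ∀ j, ∀ y : ℝ, ‖trigPoly N (coef j) y‖ ≤ C)
    {α : ℂ} {u : ℤ → ℂ} (hu : ∀ l : ℤ,
      Tendsto (fun n ↦ dyadicProduct (fun j ↦ trigPoly N (coef j)) n (α + l)) atTop (𝓝 (u l)))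
    {D q : ℝ} (hq : q ∈ Set.Ioo 0 1) (hdecay : ∀ l, ‖u l‖ ≤ D * q ^ l.natAbs) :
    {l | u l ≠ 0}.encard ≤ N := by
  by_contra! hN
  obtain ⟨s, hs, hcard⟩ := Set.exists_subset_encard_eq (Order.add_one_le_of_lt hN)
  obtain ⟨s, rfl⟩ := (Set.finite_of_encard_eq_coe (k := N + 1) hcard).exists_finset_coe
  obtain ⟨J, hJ⟩ := exists_injOn_intCast_zmod_two_pow s
  have hcard' : N < (s.image (Int.cast : ℤ → ZMod (2 ^ J))).card := by
    rw [Finset.card_image_of_injOn hJ, ← Nat.succ_le_iff]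
    rw [Set.encard_coe_eq_coe_finsetCard] at hcard
    exact_mod_cast hcard.ge
  obtain ⟨γ, hγ, hsupp, hdft⟩ := exists_dft_mul_eq_zero
    (fun k ↦ dyadicProduct (fun j ↦ trigPoly N (coef j)) J (α + k.val)) hcard'
  have hγu : (fun l : ℤ ↦ γ l * u l) = 0 :=
    eq_zero_of_tsum_mul_fourier_eq_zero hq (norm_zmod_mul_le hdecay γ) isOpen_Ioo
      (Set.nonempty_Ioo.2 (by positivity)) fun η hη ↦
        tsum_zmod_mul_mul_fourier_eq_zero h0 hbd hu hdft ((subset_tsupport η).trans hη)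
  obtain ⟨k, hk⟩ := Function.ne_iff.1 hγ
  obtain ⟨l, hl, rfl⟩ := Finset.mem_image.1 (hsupp hk)
  exact mul_ne_zero hk (hs hl) (congrFun hγu l)

/-- Let `a_j` be trigonometric polynomials of degree ≤ N with `a_j(0) = 1` and
`sup_ℝ |a_j| ≤ C`, and let `φ̂(z) = Π_{j=1}^∞ a_j(2^{−j}z)`. If the sequence `ℓ ↦ φ̂(α+ℓ)`
decays exponentially, then `{ℓ ∈ ℤ : φ̂(α+ℓ) ≠ 0}` has at most `N` elements. -/
theorem stmt_15 (N : ℕ) (C : ℝ) (hC : 0 < C)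
    (coef : ℕ → ℕ → ℂ) (A : ℕ → ℂ → ℂ)
    (hA : ∀ j : ℕ, ∀ y : ℂ, A j y =
      ∑ m ∈ Finset.range (N + 1), coef j m * Complex.exp (-(2 * (Real.pi : ℂ) * Complex.I * (m : ℂ) * y)))
    (hA0 : ∀ j : ℕ, A j 0 = 1)
    (hAbd : ∀ j : ℕ, ∀ y : ℝ, ‖A j ((y : ℂ))‖ ≤ C)
    (φ : ℝ → ℂ) (hcont : Continuous φ) (hint : Integrable φ) (hsupp : HasCompactSupport φ)
    (hprod : ∀ z : ℂ, Filter.Tendsto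
      (fun J : ℕ => ∏ j ∈ Finset.Icc 1 J, A j ((2 : ℂ) ^ (-(j : ℤ)) * z))
      Filter.atTop (nhds (fourierExt φ z)))
    (α : ℂ) (C' : ℝ) (hC' : 0 < C') (q : ℝ) (hq : q ∈ Set.Ioo (0 : ℝ) 1)
    (hdecay : ∀ ℓ : ℤ, ‖fourierExt φ (α + (ℓ : ℂ))‖ ≤ C' * q ^ ℓ.natAbs) :
    ({ℓ : ℤ | fourierExt φ (α + (ℓ : ℂ)) ≠ 0}).Finite ∧
      ({ℓ : ℤ | fourierExt φ (α + (ℓ : ℂ)) ≠ 0}).ncard ≤ N := by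
  obtain rfl : A = fun j ↦ trigPoly N (coef j) := funext₂ hA
  exact Set.encard_le_coe_iff_finite_ncard_le.1
    (stmt_15_general hA0 hAbd (fun ℓ ↦ hprod (α + ℓ)) hq hdecay)
end
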